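/- Under the algorithmic setting and local assumptions below, assume in addition that the Hölderian error-bound exponent satisfies q > 1/(1 + δ). Then {x^k} converges to x*, {‖r(x^k)‖} converges to 0 with convergence order ρ := min{1 + τ, δ + q} > 1, and {dist(x^k, X*)} converges to 0 with convergence order (1 + δ)q > 1; i.e., there exist C > 0 and k₀ such that dist(x^{k+1}, X*) ≤ C·dist(x^k, X*)^{(1+δ)q} for all k ≥ k₀. -/

import Mathlib

open scoped RealInnerProductSpace
open Filter Metric

noncomputable section

/-- The convex subdifferential of `g` at `y`. -/
def subdiff {n : ℕ} (g : EuclideanSpace ℝ (Fin n) → ℝ) (y : EuclideanSpace ℝ (Fin n)) :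
    Set (EuclideanSpace ℝ (Fin n)) :=
  {v | ∀ z, g y + ⟪v, z - y⟫ ≤ g z}

/-- The proximity operator `prox_g(z)`, the (unique, for convex `g`) minimizer of
`y ↦ g y + (1/2)‖y − z‖²`. -/
noncomputable def proxPt {n : ℕ} (g : EuclideanSpace ℝ (Fin n) → ℝ)
    (z : EuclideanSpace ℝ (Fin n)) : EuclideanSpace ℝ (Fin n) :=
  Classical.epsilon fun p => ∀ y, g p + (1 / 2) * ‖p - z‖ ^ 2 ≤ g y + (1 / 2) * ‖y - z‖ ^ 2

/-- The residual (prox-gradient) mapping `r(x) = x − prox_φ(x − ∇f(x))`. -/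
noncomputable def resid {n : ℕ} (f φ : EuclideanSpace ℝ (Fin n) → ℝ)
    (x : EuclideanSpace ℝ (Fin n)) : EuclideanSpace ℝ (Fin n) :=
  x - proxPt φ (x - gradient f x)

/-- The smallest eigenvalue of a symmetric operator on ℝᵐ, as the infimum of its quadratic
form over the unit sphere. -/
noncomputable def lambdaMin {m : ℕ} (T : EuclideanSpace ℝ (Fin m) →L[ℝ] EuclideanSpace ℝ (Fin m)) :
    ℝ :=
  ⨅ u : {u : EuclideanSpace ℝ (Fin m) // ‖u‖ = 1}, ⟪T u.1, u.1⟫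

lemma prox_exists {n : ℕ} {φ : EuclideanSpace ℝ (Fin n) → ℝ} (hφ : ConvexOn ℝ Set.univ φ)
    (z : EuclideanSpace ℝ (Fin n)) :
    ∃ p, ∀ y, φ p + (1 / 2) * ‖p - z‖ ^ 2 ≤ φ y + (1 / 2) * ‖y - z‖ ^ 2 := by
  have hc : Continuous φ := continuousOn_univ.1 (hφ.continuousOn isOpen_univ)
  have hg : Continuous (fun y => φ y + (1 / 2) * ‖y - z‖ ^ 2) := by fun_prop
  obtain ⟨p0, hp0, hmin⟩ := (isCompact_closedBall z 1).exists_isMinOn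
    ⟨z, by simp⟩ hc.continuousOn
  set m := φ p0
  have hm : ∀ y ∈ closedBall z 1, m ≤ φ y := fun y hy => hmin hy
  refine hg.exists_forall_le' z ?_
  have hev : ∀ᶠ y in cocompact (EuclideanSpace ℝ (Fin n)),
      y ∈ (closedBall z (max 1 (2 * (φ z - m))))ᶜ :=
    (isCompact_closedBall z _).compl_mem_cocompact
  filter_upwards [hev] with y hy
  have hy' : max 1 (2 * (φ z - m)) < ‖y - z‖ := by
    simpa [mem_closedBall, dist_eq_norm] using hy
  have h1 : 1 < ‖y - z‖ := lt_of_le_of_lt (le_max_left _ _) hy'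
  have h2 : 2 * (φ z - m) < ‖y - z‖ := lt_of_le_of_lt (le_max_right _ _) hy'
  set s := ‖y - z‖ with hs
  have hs0 : 0 < s := by linarith
  have ht : s⁻¹ ≤ 1 := inv_le_one_of_one_le₀ h1.le
  have ht0 : 0 < s⁻¹ := inv_pos.2 hs0
  have hcv := hφ.2 (Set.mem_univ z) (Set.mem_univ y) (sub_nonneg.2 ht) ht0.le (by ring)
  have hin : m ≤ φ ((1 - s⁻¹) • z + s⁻¹ • y) := by
    apply hm
    rw [mem_closedBall, dist_eq_norm]
    have : (1 - s⁻¹) • z + s⁻¹ • y - z = s⁻¹ • (y - z) := by module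
    rw [this, norm_smul, Real.norm_of_nonneg ht0.le, ← hs, inv_mul_cancel₀ hs0.ne']
  simp only [smul_eq_mul] at hcv
  have h3 : m ≤ (1 - s⁻¹) * φ z + s⁻¹ * φ y := hin.trans hcv
  have h4 : m * s ≤ (s - 1) * φ z + φ y := by
    have := mul_le_mul_of_nonneg_right h3 hs0.le
    have e : ((1 - s⁻¹) * φ z + s⁻¹ * φ y) * s = (s - 1) * φ z + φ y := by
      field_simp
    linarith
  simp only [sub_self, norm_zero]
  nlinarith

lemma prox_spec {n : ℕ} {φ : EuclideanSpace ℝ (Fin n) → ℝ} (hφ : ConvexOn ℝ Set.univ φ)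
    (z : EuclideanSpace ℝ (Fin n)) : z - proxPt φ z ∈ subdiff φ (proxPt φ z) := by
  have hp : ∀ y, φ (proxPt φ z) + (1 / 2) * ‖proxPt φ z - z‖ ^ 2 ≤ φ y + (1 / 2) * ‖y - z‖ ^ 2 :=
    Classical.epsilon_spec (prox_exists hφ z)
  set p := proxPt φ z
  intro y
  have key : ∀ t : ℝ, 0 < t → t ≤ 1 →
      φ p + ⟪z - p, y - p⟫ ≤ φ y + t * (1 / 2 * ‖y - p‖ ^ 2) := by
    intro t ht ht1
    have h1 := hp ((1 - t) • p + t • y)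
    have h2 := hφ.2 (Set.mem_univ p) (Set.mem_univ y) (sub_nonneg.2 ht1) ht.le (by ring)
    simp only [smul_eq_mul] at h2
    have h3 : (1 - t) • p + t • y - z = (p - z) + t • (y - p) := by module
    rw [h3, norm_add_sq_real, norm_smul, real_inner_smul_right, Real.norm_of_nonneg ht.le] at h1
    have h4 : ⟪z - p, y - p⟫ = - ⟪p - z, y - p⟫ := by
      rw [← inner_neg_left, neg_sub]
    rw [h4]
    have : t * (φ p + -⟪p - z, y - p⟫) ≤ t * (φ y + t * (1 / 2 * ‖y - p‖ ^ 2)) := by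
      nlinarith
    exact le_of_mul_le_mul_left this ht
  refine le_of_forall_pos_le_add fun e he => ?_
  set N := 1 / 2 * ‖y - p‖ ^ 2 with hN
  have hN0 : 0 ≤ N := by positivity
  have hk := key (min 1 (e / (N + 1))) (by positivity) (min_le_left _ _)
  have : min 1 (e / (N + 1)) * N ≤ e := by
    calc min 1 (e / (N + 1)) * N ≤ (e / (N + 1)) * N := by gcongr; exact min_le_right _ _
      _ ≤ (e / (N + 1)) * (N + 1) := by gcongr; linarith
      _ = e := by field_simp
  linarith

lemma subdiff_mono {n : ℕ} {φ : EuclideanSpace ℝ (Fin n) → ℝ}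
    {p p' v v' : EuclideanSpace ℝ (Fin n)} (h : v ∈ subdiff φ p) (h' : v' ∈ subdiff φ p') :
    0 ≤ ⟪v - v', p - p'⟫ := by
  have h1 := h p'
  have h2 := h' p
  have : ⟪v, p' - p⟫ = - ⟪v, p - p'⟫ := by rw [← inner_neg_right, neg_sub]
  rw [inner_sub_left]
  linarith

lemma prox_nonexp {n : ℕ} {φ : EuclideanSpace ℝ (Fin n) → ℝ} (hφ : ConvexOn ℝ Set.univ φ)
    (z z' : EuclideanSpace ℝ (Fin n)) : ‖proxPt φ z - proxPt φ z'‖ ≤ ‖z - z'‖ := by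
  have h := subdiff_mono (prox_spec hφ z) (prox_spec hφ z')
  set p := proxPt φ z
  set p' := proxPt φ z'
  have e : z - p - (z' - p') = (z - z') - (p - p') := by abel
  rw [e, inner_sub_left, real_inner_self_eq_norm_sq] at h
  have := real_inner_le_norm (z - z') (p - p')
  by_contra hc
  push Not at hc
  nlinarith [norm_nonneg (z - z'), norm_nonneg (p - p')]

lemma prox_eq {n : ℕ} {φ : EuclideanSpace ℝ (Fin n) → ℝ} (hφ : ConvexOn ℝ Set.univ φ)
    {z p : EuclideanSpace ℝ (Fin n)} (h : z - p ∈ subdiff φ p) : proxPt φ z = p := by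
  have h := subdiff_mono (prox_spec hφ z) h
  set p' := proxPt φ z
  have e : z - p' - (z - p) = - (p' - p) := by abel
  rw [e, inner_neg_left, real_inner_self_eq_norm_sq] at h
  have : ‖p' - p‖ = 0 := by nlinarith [norm_nonneg (p' - p)]
  exact sub_eq_zero.1 (norm_eq_zero.1 this)

lemma resid_lip {n : ℕ} {φ : EuclideanSpace ℝ (Fin n) → ℝ} (hφ : ConvexOn ℝ Set.univ φ)
    {f : EuclideanSpace ℝ (Fin n) → ℝ} {x y : EuclideanSpace ℝ (Fin n)}
    (hy : -gradient f y ∈ subdiff φ y) {M : ℝ}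
    (hM : ‖gradient f x - gradient f y‖ ≤ M * ‖x - y‖) :
    ‖resid f φ x‖ ≤ (2 + M) * ‖x - y‖ := by
  have h0 : proxPt φ (y - gradient f y) = y := prox_eq hφ (by
    convert hy using 1; abel)
  have h1 := prox_nonexp hφ (x - gradient f x) (y - gradient f y)
  rw [h0] at h1
  have e1 : resid f φ x = (x - y) - (proxPt φ (x - gradient f x) - y) := by
    unfold resid; abel
  have e2 : x - gradient f x - (y - gradient f y) = (x - y) - (gradient f x - gradient f y) := by
    abel
  rw [e2] at h1
  rw [e1]
  have := norm_sub_le (x - y) (proxPt φ (x - gradient f x) - y)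
  have := norm_sub_le (x - y) (gradient f x - gradient f y)
  linarith

/-! calculus -/

lemma grad_comp {n m : ℕ} {ψ : EuclideanSpace ℝ (Fin m) → ℝ}
    {A : EuclideanSpace ℝ (Fin n) →L[ℝ] EuclideanSpace ℝ (Fin m)}
    {b : EuclideanSpace ℝ (Fin m)} (hψ : ContDiff ℝ 2 ψ)
    {f : EuclideanSpace ℝ (Fin n) → ℝ} (hf : ∀ y, f y = ψ (A y - b)) :
    (∀ y, HasGradientAt f (gradient f y) y) ∧
    (∀ y, HasFDerivAt (gradient f) (fderiv ℝ (gradient f) y) y) ∧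
    (∀ y, fderiv ℝ (gradient f) y = (ContinuousLinearMap.adjoint A).comp
      ((fderiv ℝ (gradient ψ) (A y - b)).comp A)) := by
  have hA : ∀ y, HasFDerivAt (fun y => A y - b) A y := fun y => A.hasFDerivAt.sub_const b
  have hψd : Differentiable ℝ ψ := hψ.differentiable (by norm_num)
  have hgf : ∀ y, HasGradientAt f (ContinuousLinearMap.adjoint A (gradient ψ (A y - b))) y := by
    intro y
    have h1 : HasFDerivAt f ((fderiv ℝ ψ (A y - b)).comp A) y := by
      have : f = ψ ∘ (fun y => A y - b) := funext hf
      rw [this]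
      exact (hψd _).hasFDerivAt.comp y (hA y)
    rw [hasGradientAt_iff_hasFDerivAt]
    have e : (InnerProductSpace.toDual ℝ (EuclideanSpace ℝ (Fin n)))
        ((ContinuousLinearMap.adjoint A) (gradient ψ (A y - b))) =
        (fderiv ℝ ψ (A y - b)).comp A := by
      ext1 v
      rw [InnerProductSpace.toDual_apply_apply, ContinuousLinearMap.adjoint_inner_left,
        inner_gradient_left]
      rfl
    rw [e]
    exact h1
  have hgrad : gradient f = fun y => ContinuousLinearMap.adjoint A (gradient ψ (A y - b)) :=
    gradient_eq hgf
  have hgψ : Differentiable ℝ (gradient ψ) := by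
    have h1 : ContDiff ℝ 1 (fderiv ℝ ψ) := hψ.fderiv_right (by norm_num)
    have h2 : ContDiff ℝ 1 (gradient ψ) := by
      unfold gradient
      exact ((InnerProductSpace.toDual ℝ _).symm.toContinuousLinearEquiv.contDiff).comp h1
    exact h2.differentiable (by norm_num)
  have hd : ∀ y, HasFDerivAt (gradient f) ((ContinuousLinearMap.adjoint A).comp
      ((fderiv ℝ (gradient ψ) (A y - b)).comp A)) y := by
    intro y
    rw [hgrad]
    exact (ContinuousLinearMap.adjoint A).hasFDerivAt.comp y
      ((hgψ _).hasFDerivAt.comp y (hA y))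
  refine ⟨fun y => ?_, fun y => (hd y).differentiableAt.hasFDerivAt, fun y => (hd y).fderiv⟩
  exact (hgf y).differentiableAt.hasGradientAt

lemma calc_pack {n : ℕ} {f : EuclideanSpace ℝ (Fin n) → ℝ}
    (h1 : ∀ y, HasGradientAt f (gradient f y) y)
    (h2 : ∀ y, HasFDerivAt (gradient f) (fderiv ℝ (gradient f) y) y)
    {s : Set (EuclideanSpace ℝ (Fin n))} (hs : Convex ℝ s) {Lh : ℝ} (hLh : 0 ≤ Lh)
    (hlip : ∀ u ∈ s, ∀ v ∈ s,
      ‖fderiv ℝ (gradient f) u - fderiv ℝ (gradient f) v‖ ≤ Lh * ‖u - v‖) :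
    ∀ u ∈ s, ∀ v ∈ s,
      ‖gradient f v - gradient f u - fderiv ℝ (gradient f) u (v - u)‖ ≤ Lh * ‖v - u‖ ^ 2 ∧
      |f v - f u - ⟪gradient f u, v - u⟫
        - 1 / 2 * ⟪v - u, fderiv ℝ (gradient f) u (v - u)⟫| ≤ Lh * ‖v - u‖ ^ 3 := by
  have hfirst : ∀ u ∈ s, ∀ v ∈ s,
      ‖gradient f v - gradient f u - fderiv ℝ (gradient f) u (v - u)‖ ≤ Lh * ‖v - u‖ ^ 2 := by
    intro u hu v hv
    have hseg : segment ℝ u v ⊆ s := hs.segment_subset hu hv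
    have := (convex_segment u v).norm_image_sub_le_of_norm_hasFDerivWithin_le'
      (f := gradient f) (f' := fderiv ℝ (gradient f)) (φ := fderiv ℝ (gradient f) u)
      (C := Lh * ‖v - u‖) (x := u) (y := v)
      (fun z hz => (h2 z).hasFDerivWithinAt) ?_ (left_mem_segment ℝ u v)
      (right_mem_segment ℝ u v)
    · calc _ ≤ _ := this
        _ = _ := by ring
    · intro z hz
      refine (hlip z (hseg hz) u hu).trans ?_
      gcongr
      rw [segment_eq_image'] at hz
      obtain ⟨t, ht, rfl⟩ := hz
      simp only [add_sub_cancel_left, norm_smul, Real.norm_of_nonneg ht.1]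
      exact mul_le_of_le_one_left (norm_nonneg _) ht.2
  intro u hu v hv
  refine ⟨hfirst u hu v hv, ?_⟩
  set dd := v - u with hdd
  set H := fderiv ℝ (gradient f) u with hH
  set g : ℝ → ℝ := fun t => f (u + t • dd) - t * ⟪gradient f u, dd⟫ - t ^ 2 / 2 * ⟪dd, H dd⟫ with hg
  have hline : ∀ t, HasDerivAt (fun t : ℝ => u + t • dd) dd t := by
    intro t
    simpa using ((hasDerivAt_id t).smul_const dd).const_add u
  have hgd : ∀ t, HasDerivAt g (⟪gradient f (u + t • dd), dd⟫ - ⟪gradient f u, dd⟫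
      - t * ⟪dd, H dd⟫) t := by
    intro t
    have ha : HasDerivAt (fun t : ℝ => f (u + t • dd)) ⟪gradient f (u + t • dd), dd⟫ t := by
      rw [inner_gradient_left]
      exact (h1 (u + t • dd)).differentiableAt.hasFDerivAt.comp_hasDerivAt t (hline t)
    have hb : HasDerivAt (fun t : ℝ => t * ⟪gradient f u, dd⟫) ⟪gradient f u, dd⟫ t := by
      simpa using (hasDerivAt_id t).mul_const ⟪gradient f u, dd⟫
    have hc : HasDerivAt (fun t : ℝ => t ^ 2 / 2 * ⟪dd, H dd⟫) (t * ⟪dd, H dd⟫) t := by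
      have := (((hasDerivAt_id t).pow 2).div_const 2).mul_const ⟪dd, H dd⟫
      simpa using this
    exact (ha.sub hb).sub hc
  have hb := norm_image_sub_le_of_norm_deriv_le_segment_01' (f := g) (C := Lh * ‖dd‖ ^ 3)
    (fun t _ => (hgd t).hasDerivWithinAt) ?_
  · have e : g 1 - g 0 = f v - f u - ⟪gradient f u, dd⟫ - 1 / 2 * ⟪dd, H dd⟫ := by
      simp [hg, hdd]; ring
    rw [e] at hb
    exact hb
  · intro t ht
    have hin : u + t • dd ∈ s := by
      rw [hdd]
      exact hs.add_smul_sub_mem hu hv ⟨ht.1, ht.2.le⟩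
    have h3 := hfirst u hu _ hin
    rw [add_sub_cancel_left] at h3
    have e : ⟪gradient f (u + t • dd), dd⟫ - ⟪gradient f u, dd⟫ - t * ⟪dd, H dd⟫
        = ⟪gradient f (u + t • dd) - gradient f u - H (t • dd), dd⟫ := by
      rw [inner_sub_left (gradient f (u + t • dd) - gradient f u),
        inner_sub_left (gradient f (u + t • dd)), map_smul, real_inner_smul_left, real_inner_comm dd (H dd)]
    rw [e]
    refine (norm_inner_le_norm _ _).trans ?_
    have h4 : ‖t • dd‖ ≤ ‖dd‖ := by
      rw [norm_smul, Real.norm_of_nonneg ht.1]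
      exact mul_le_of_le_one_left (norm_nonneg _) ht.2.le
    calc _ ≤ Lh * ‖t • dd‖ ^ 2 * ‖dd‖ := by gcongr
      _ ≤ Lh * ‖dd‖ ^ 2 * ‖dd‖ := by gcongr
      _ = _ := by ring

lemma lambdaMin_le {m : ℕ} (T : EuclideanSpace ℝ (Fin m) →L[ℝ] EuclideanSpace ℝ (Fin m))
    (u : EuclideanSpace ℝ (Fin m)) : lambdaMin T * ‖u‖ ^ 2 ≤ ⟪T u, u⟫ := by
  by_cases hu : u = 0
  · simp [hu]
  have hn : 0 < ‖u‖ := norm_pos_iff.2 hu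
  have hb : BddBelow (Set.range fun u : {u : EuclideanSpace ℝ (Fin m) // ‖u‖ = 1} =>
      ⟪T u.1, u.1⟫) := by
    refine ⟨-‖T‖, ?_⟩
    rintro _ ⟨v, rfl⟩
    have h1 := abs_real_inner_le_norm (T v.1) v.1
    have h2 := T.le_opNorm v.1
    rw [v.2] at h1 h2
    have := (abs_le.1 h1).1
    simp only
    linarith
  have := ciInf_le hb ⟨‖u‖⁻¹ • u, by rw [norm_smul, norm_inv, norm_norm, inv_mul_cancel₀ hn.ne']⟩
  simp only [map_smul, real_inner_smul_left, real_inner_smul_right] at this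
  calc lambdaMin T * ‖u‖ ^ 2 ≤ (‖u‖⁻¹ * (‖u‖⁻¹ * ⟪T u, u⟫)) * ‖u‖ ^ 2 := by
        gcongr; exact this
    _ = _ := by field_simp

lemma neg_lambdaMin_le {m : ℕ} (T S : EuclideanSpace ℝ (Fin m) →L[ℝ] EuclideanSpace ℝ (Fin m))
    (hS : ∀ u, 0 ≤ ⟪S u, u⟫) : max (-(lambdaMin T)) 0 ≤ ‖T - S‖ := by
  refine max_le ?_ (norm_nonneg _)
  rw [neg_le]
  by_cases hne : Nonempty {u : EuclideanSpace ℝ (Fin m) // ‖u‖ = 1}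
  · refine le_ciInf fun u => ?_
    have h1 := abs_real_inner_le_norm ((T - S) u.1) u.1
    have h2 := (T - S).le_opNorm u.1
    rw [u.2] at h1 h2
    have h3 := (abs_le.1 h1).1
    have h4 := hS u.1
    rw [sub_apply, inner_sub_left] at h3
    rw [sub_apply] at h2
    linarith
  · rw [not_nonempty_iff] at hne
    unfold lambdaMin
    rw [Real.iInf_of_isEmpty]
    simp

lemma rpow_small (C p c : ℝ) (hp : 0 < p) (hc : 0 < c) :
    ∃ r₀ > 0, ∀ t, 0 ≤ t → t ≤ r₀ → C * t ^ p < c := by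
  have hcont : ContinuousAt (fun t : ℝ => C * t ^ p) 0 :=
    continuousAt_const.mul (Real.continuousAt_rpow_const 0 p (Or.inr hp.le))
  have h0 : C * (0 : ℝ) ^ p < c := by simpa [Real.zero_rpow hp.ne'] using hc
  have hev := hcont.eventually_lt continuousAt_const h0
  obtain ⟨r, hr, hb⟩ := Metric.eventually_nhds_iff.1 hev
  refine ⟨r / 2, by positivity, fun t ht htr => hb ?_⟩
  rw [Real.dist_eq, sub_zero, abs_of_nonneg ht]
  linarith

lemma quad_bound {n : ℕ} (e u w : EuclideanSpace ℝ (Fin n))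
    (G : EuclideanSpace ℝ (Fin n) →L[ℝ] EuclideanSpace ℝ (Fin n)) (μ MG : ℝ)
    (hG : ‖G‖ ≤ MG) (hpsd : μ * ‖u‖ ^ 2 ≤ ⟪G u, u⟫) (h : 0 ≤ ⟪e - G u + w, u - e⟫) :
    ‖u‖ ≤ ‖e‖ ∨ μ * ‖u‖ ≤ (MG + 1) * ‖e‖ + 2 * ‖w‖ := by
  by_cases hc : ‖u‖ ≤ ‖e‖
  · exact Or.inl hc
  right
  push Not at hc
  have hu : 0 < ‖u‖ := lt_of_le_of_lt (norm_nonneg _) hc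
  have e1 : ⟪e - G u + w, u - e⟫ = ⟪e, u⟫ - ‖e‖ ^ 2 - ⟪G u, u⟫ + ⟪G u, e⟫ + ⟪w, u⟫ - ⟪w, e⟫ := by
    simp only [inner_sub_right, inner_add_left, inner_sub_left, real_inner_self_eq_norm_sq]
    ring
  rw [e1] at h
  have i1 := real_inner_le_norm e u
  have i2 := real_inner_le_norm (G u) e
  have i3 := real_inner_le_norm w u
  have i4 := (abs_le.1 (abs_real_inner_le_norm w e)).1
  have i5 : ‖G u‖ ≤ MG * ‖u‖ := G.le_of_opNorm_le hG u
  have i6 : ‖G u‖ * ‖e‖ ≤ MG * ‖u‖ * ‖e‖ := by gcongr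
  have i7 : ‖w‖ * ‖e‖ ≤ ‖w‖ * ‖u‖ := by gcongr
  have : ‖u‖ * (μ * ‖u‖) ≤ ‖u‖ * ((MG + 1) * ‖e‖ + 2 * ‖w‖) := by
    nlinarith [sq_nonneg ‖e‖]
  exact le_of_mul_le_mul_left this hu

lemma step_A {n : ℕ} {φ : EuclideanSpace ℝ (Fin n) → ℝ} (hφ : ConvexOn ℝ Set.univ φ)
    {f : EuclideanSpace ℝ (Fin n) → ℝ} {x y xh e : EuclideanSpace ℝ (Fin n)}
    (hy : -gradient f y ∈ subdiff φ y)
    (Hf B G : EuclideanSpace ℝ (Fin n) →L[ℝ] EuclideanSpace ℝ (Fin n)) {μ MG Lh cB : ℝ}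
    (hμ : 0 ≤ μ)
    (hG : G = Hf + B + μ • ContinuousLinearMap.id ℝ (EuclideanSpace ℝ (Fin n)))
    (hw : ‖gradient f y - gradient f x - Hf (y - x)‖ ≤ Lh * ‖y - x‖ ^ 2)
    (hB : ‖B‖ ≤ cB * ‖y - x‖) (hMG : ‖G‖ ≤ MG) (hpsd : ∀ u, μ * ‖u‖ ^ 2 ≤ ⟪G u, u⟫)
    (he : e = xh - proxPt φ (xh - gradient f x - G (xh - x))) :
    ‖xh - y‖ ≤ ‖e‖ ∨ μ * ‖xh - y‖ ≤ (MG + 1) * ‖e‖ +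
      2 * ((Lh + cB) * ‖y - x‖ ^ 2 + μ * ‖y - x‖) := by
  have hm := subdiff_mono (prox_spec hφ (xh - gradient f x - G (xh - x))) hy
  have hp : proxPt φ (xh - gradient f x - G (xh - x)) = xh - e := by rw [he]; abel
  rw [hp] at hm
  set w := gradient f y - gradient f x - Hf (y - x) - B (y - x) - μ • (y - x) with hwdef
  have e1 : xh - gradient f x - G (xh - x) - (xh - e) - -gradient f y
      = e - G (xh - y) + w := by
    have : G (xh - x) = G (xh - y) + (Hf (y - x) + B (y - x) + μ • (y - x)) := by
      have e2 : xh - x = (xh - y) + (y - x) := by abel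
      rw [e2, map_add]
      congr 1
      rw [hG]; simp
    rw [this, hwdef]
    abel
  have e2 : xh - e - y = (xh - y) - e := by abel
  rw [e1, e2] at hm
  have hwn : ‖w‖ ≤ (Lh + cB) * ‖y - x‖ ^ 2 + μ * ‖y - x‖ := by
    have n1 := norm_sub_le (gradient f y - gradient f x - Hf (y - x) - B (y - x)) (μ • (y - x))
    have n2 := norm_sub_le (gradient f y - gradient f x - Hf (y - x)) (B (y - x))
    have n3 := B.le_of_opNorm_le hB (y - x)
    rw [norm_smul, Real.norm_of_nonneg hμ] at n1
    rw [hwdef]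
    nlinarith
  rcases quad_bound e (xh - y) w G μ MG hMG (hpsd _) hm with h | h
  · exact Or.inl h
  · right; linarith

lemma step_B {n : ℕ} {φ : EuclideanSpace ℝ (Fin n) → ℝ} (hφ : ConvexOn ℝ Set.univ φ)
    {f : EuclideanSpace ℝ (Fin n) → ℝ} {x xh e : EuclideanSpace ℝ (Fin n)}
    (Hf B G : EuclideanSpace ℝ (Fin n) →L[ℝ] EuclideanSpace ℝ (Fin n)) {μ Lh b : ℝ}
    (hμ : 0 ≤ μ)
    (hG : G = Hf + B + μ • ContinuousLinearMap.id ℝ (EuclideanSpace ℝ (Fin n)))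
    (hw : ‖gradient f xh - gradient f x - Hf (xh - x)‖ ≤ Lh * ‖xh - x‖ ^ 2)
    (hB : ‖B‖ ≤ b)
    (he : e = xh - proxPt φ (xh - gradient f x - G (xh - x))) :
    ‖resid f φ xh‖ ≤ ‖e‖ + Lh * ‖xh - x‖ ^ 2 + b * ‖xh - x‖ + μ * ‖xh - x‖ := by
  have h1 := prox_nonexp hφ (xh - gradient f x - G (xh - x)) (xh - gradient f xh)
  have e1 : resid f φ xh = e + (proxPt φ (xh - gradient f x - G (xh - x))
      - proxPt φ (xh - gradient f xh)) := by
    rw [he]; unfold resid; abel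
  have e2 : xh - gradient f x - G (xh - x) - (xh - gradient f xh)
      = gradient f xh - gradient f x - Hf (xh - x) - B (xh - x) - μ • (xh - x) := by
    rw [hG]; simp only [add_apply, smul_apply, ContinuousLinearMap.id_apply]; abel
  rw [e2] at h1
  have n1 := norm_sub_le (gradient f xh - gradient f x - Hf (xh - x) - B (xh - x)) (μ • (xh - x))
  have n2 := norm_sub_le (gradient f xh - gradient f x - Hf (xh - x)) (B (xh - x))
  have n3 := B.le_of_opNorm_le hB (xh - x)
  rw [norm_smul, Real.norm_of_nonneg hμ] at n1
  rw [e1]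
  have n4 := norm_add_le e (proxPt φ (xh - gradient f x - G (xh - x))
      - proxPt φ (xh - gradient f xh))
  linarith

lemma step_C {n : ℕ} {φ : EuclideanSpace ℝ (Fin n) → ℝ} (hφ : ConvexOn ℝ Set.univ φ)
    {f : EuclideanSpace ℝ (Fin n) → ℝ} {x xh e : EuclideanSpace ℝ (Fin n)}
    (G : EuclideanSpace ℝ (Fin n) →L[ℝ] EuclideanSpace ℝ (Fin n)) {MG θ : ℝ}
    (hMG : ‖G‖ ≤ MG)
    (he : e = xh - proxPt φ (xh - gradient f x - G (xh - x)))
    (hθ : ‖e‖ ≤ θ * ‖resid f φ x‖) :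
    (1 - θ) * ‖resid f φ x‖ ≤ (2 + MG) * ‖xh - x‖ := by
  have h1 := prox_nonexp hφ (xh - gradient f x - G (xh - x)) (x - gradient f x)
  have e1 : resid f φ x = e + (proxPt φ (xh - gradient f x - G (xh - x))
      - proxPt φ (x - gradient f x)) - (xh - x) := by
    rw [he]; unfold resid; abel
  have e2 : xh - gradient f x - G (xh - x) - (x - gradient f x) = (xh - x) - G (xh - x) := by
    abel
  rw [e2] at h1
  have n1 := norm_sub_le (xh - x) (G (xh - x))
  have n3 := G.le_of_opNorm_le hMG (xh - x)
  have n4 := norm_add_le e (proxPt φ (xh - gradient f x - G (xh - x))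
      - proxPt φ (x - gradient f x))
  have n5 := norm_sub_le (e + (proxPt φ (xh - gradient f x - G (xh - x))
      - proxPt φ (x - gradient f x))) (xh - x)
  rw [← e1] at n5
  linarith

/-- bound on the step length -/
lemma real_step (c1 c2 cL MG νmin νbar δ τ qq r h μ e u : ℝ) (hc1 : 0 ≤ c1)
    (hcL : 0 ≤ cL) (hMG : 0 ≤ MG) (hνmin : 0 < νmin) (hνbar : 0 ≤ νbar)
    (hδτ : δ ≤ τ) (hδq : δ ≤ qq)
    (hr : 0 < r) (hr1 : r ≤ 1) (hh : 0 ≤ h) (hrh : r ≤ c1 * h) (hhr : h ≤ c2 * r ^ qq)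
    (hc2 : 0 ≤ c2)
    (hμ1 : νmin * r ^ δ ≤ μ) (hμ2 : μ ≤ νbar * r ^ δ)
    (he1 : e ≤ r) (he2 : e ≤ r ^ (1 + τ)) (hu : 0 ≤ u)
    (hA : u ≤ e ∨ μ * u ≤ (MG + 1) * e + 2 * (cL * h ^ 2 + μ * h)) :
    u ≤ (c1 + ((MG + 1) * c1 + 2 * (cL * c2 + νbar)) / νmin) * h ∧
    h ≤ c2 * r ^ δ ∧ e ≤ c1 * (h * r ^ δ) := by
  have hrd : 0 < r ^ δ := Real.rpow_pos_of_pos hr _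
  have hh2 : h ≤ c2 * r ^ δ := hhr.trans (by
    gcongr ?_ * ?_
    exact Real.rpow_le_rpow_of_exponent_ge hr hr1 hδq)
  have he3 : e ≤ c1 * (h * r ^ δ) := by
    calc e ≤ r ^ (1 + τ) := he2
      _ ≤ r ^ (1 + δ) := Real.rpow_le_rpow_of_exponent_ge hr hr1 (by linarith)
      _ = r * r ^ δ := by rw [Real.rpow_add hr, Real.rpow_one]
      _ ≤ (c1 * h) * r ^ δ := by gcongr
      _ = _ := by ring
  refine ⟨?_, hh2, he3⟩
  set K := (MG + 1) * c1 + 2 * (cL * c2 + νbar) with hK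
  have hK0 : 0 ≤ K := by positivity
  rw [add_mul]
  have hKh : 0 ≤ K / νmin * h := by positivity
  rcases hA with h1 | h1
  · linarith
  · have h2 : cL * h ^ 2 ≤ cL * c2 * (h * r ^ δ) := by
      calc cL * h ^ 2 = cL * (h * h) := by ring
        _ ≤ cL * (h * (c2 * r ^ δ)) := by gcongr
        _ = _ := by ring
    have h3 : μ * h ≤ νbar * (h * r ^ δ) := by
      calc μ * h ≤ (νbar * r ^ δ) * h := by gcongr
        _ = _ := by ring
    have h4 : νmin * r ^ δ * u ≤ K * (h * r ^ δ) := by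
      calc νmin * r ^ δ * u ≤ μ * u := by gcongr
        _ ≤ (MG + 1) * (c1 * (h * r ^ δ)) + 2 * (cL * c2 * (h * r ^ δ) + νbar * (h * r ^ δ)) := by
            refine h1.trans ?_
            gcongr
        _ = _ := by rw [hK]; ring
    have h5 : r ^ δ * (νmin * u) ≤ r ^ δ * (K * h) := by linarith
    have h6 := le_of_mul_le_mul_left h5 hrd
    have h7 : u ≤ K / νmin * h := by
      rw [div_mul_eq_mul_div, le_div_iff₀ hνmin]; linarith
    have : 0 ≤ c1 * h := by positivity
    linarith

/-- bound on the new residual -/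
lemma real_res (c1 c2 c4 Lh cB νbar δ τ qq r h μ e d R : ℝ) (hc1 : 0 ≤ c1)
    (hLh : 0 ≤ Lh) (hcB : 0 ≤ cB) (hνbar : 0 ≤ νbar) (hc4 : 0 ≤ c4) (hδ : 0 ≤ δ)
    (hr : 0 < r) (hr1 : r ≤ 1) (hh : 0 ≤ h) (hrh : r ≤ c1 * h) (hhr : h ≤ c2 * r ^ qq)
    (hc2 : 0 ≤ c2) (hh2 : h ≤ c2 * r ^ δ) (he3 : e ≤ c1 * (h * r ^ δ))
    (hμ2 : μ ≤ νbar * r ^ δ) (hd : 0 ≤ d) (hdh : d ≤ c4 * h)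
    (he2 : e ≤ r ^ (1 + τ))
    (hR : R ≤ e + Lh * d ^ 2 + cB * h * d + μ * d) :
    R ≤ (1 + ((Lh * c4 ^ 2 + cB * c4) * c2 + νbar * c4) * c2) * r ^ min (1 + τ) (δ + qq) ∧
    R ≤ (c1 + ((Lh * c4 ^ 2 + cB * c4) * c2 + νbar * c4)) * c1 ^ δ * h ^ (1 + δ) := by
  have hrd : 0 < r ^ δ := Real.rpow_pos_of_pos hr _
  set c5 := (Lh * c4 ^ 2 + cB * c4) * c2 + νbar * c4 with hc5
  have hc50 : 0 ≤ c5 := by positivity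
  have hR2 : R ≤ e + c5 * (h * r ^ δ) := by
    have a1 : Lh * d ^ 2 ≤ Lh * (c4 * h) ^ 2 := by gcongr
    have a2 : cB * h * d ≤ cB * h * (c4 * h) := by gcongr
    have a3 : μ * d ≤ νbar * r ^ δ * (c4 * h) := by
      calc μ * d ≤ (νbar * r ^ δ) * d := by gcongr
        _ ≤ _ := by gcongr
    have a4 : (Lh * c4 ^ 2 + cB * c4) * (h * h) ≤
        (Lh * c4 ^ 2 + cB * c4) * (h * (c2 * r ^ δ)) := by gcongr
    rw [hc5]
    nlinarith
  have hhpos : 0 < h := by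
    rcases hh.lt_or_eq with h1 | h1
    · exact h1
    · rw [← h1, mul_zero] at hrh; linarith
  constructor
  · have b1 : e ≤ r ^ min (1 + τ) (δ + qq) :=
      he2.trans (Real.rpow_le_rpow_of_exponent_ge hr hr1 (min_le_left _ _))
    have b2 : h * r ^ δ ≤ c2 * r ^ min (1 + τ) (δ + qq) := by
      calc h * r ^ δ ≤ (c2 * r ^ qq) * r ^ δ := by gcongr
        _ = c2 * r ^ (δ + qq) := by rw [Real.rpow_add hr]; ring
        _ ≤ _ := by
          gcongr ?_ * ?_
          exact Real.rpow_le_rpow_of_exponent_ge hr hr1 (min_le_right _ _)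
    have b3 := mul_le_mul_of_nonneg_left b2 hc50
    linarith
  · have b1 : h * r ^ δ ≤ c1 ^ δ * h ^ (1 + δ) := by
      calc h * r ^ δ ≤ h * (c1 * h) ^ δ := by gcongr
        _ = _ := by
          rw [Real.mul_rpow hc1 hh, Real.rpow_add hhpos, Real.rpow_one]; ring
    calc R ≤ (c1 + c5) * (h * r ^ δ) := by linarith
      _ ≤ (c1 + c5) * (c1 ^ δ * h ^ (1 + δ)) := by gcongr
      _ = _ := by ring

/-- success tests -/
lemma real_succ (c2 c4 Lh MG νmin δ qq κ pmin θ c₁ r h μ d pred ared : ℝ)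
    (hLh : 0 ≤ Lh) (hMG : 0 ≤ MG) (hνmin : 0 < νmin) (hc4 : 0 ≤ c4)
    (hθ : θ < 1) (hpmin : 0 < pmin) (hc₁ : 0 < c₁) (hc₁' : c₁ < 1)
    (hr : 0 < r) (hhr : h ≤ c2 * r ^ qq)
    (hμ1 : νmin * r ^ δ ≤ μ) (hdh : d ≤ c4 * h) (hd : 0 ≤ d)
    (hC : (1 - θ) * r ≤ (2 + MG) * d)
    (hpred : μ / 2 * d ^ 2 ≤ pred) (hared : |ared - pred| ≤ Lh * d ^ 3)
    (hs1 : (2 * pmin * (2 + MG)) * r ^ (κ - (1 + δ)) < νmin)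
    (hs2 : (Lh * c4 * c2) * r ^ (qq - δ) < (1 - c₁) * νmin / 2) :
    pmin * (1 - θ) * d * min r (r ^ κ) < pred ∧ c₁ < ared / pred := by
  have hdpos : 0 < d := by
    rcases hd.lt_or_eq with h1 | h1
    · exact h1
    · rw [← h1, mul_zero] at hC
      have : 0 < (1 - θ) * r := mul_pos (by linarith) hr
      linarith
  have hrd : 0 < r ^ δ := Real.rpow_pos_of_pos hr _
  have hp2 : νmin * r ^ δ / 2 * d ^ 2 ≤ pred := by
    refine le_trans ?_ hpred
    gcongr
  have hppos : 0 < pred := lt_of_lt_of_le (by positivity) hp2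
  constructor
  · have e1 : r ^ κ = r ^ (κ - (1 + δ)) * (r * r ^ δ) := by
      have : r * r ^ δ = r ^ (1 + δ) := by rw [Real.rpow_add hr, Real.rpow_one]
      rw [this, ← Real.rpow_add hr]
      congr 1; ring
    have h1θ : 0 < 1 - θ := by linarith
    have hM : 0 < 2 + MG := by linarith
    have a0 : pmin * (1 - θ) * d * min r (r ^ κ) ≤ pmin * (1 - θ) * d * r ^ κ := by
      gcongr; exact min_le_right _ _
    have a1 : (2 * pmin * (2 + MG)) * r ^ (κ - (1 + δ)) * ((1 - θ) * d * (r * r ^ δ))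
        < νmin * ((1 - θ) * d * (r * r ^ δ)) := by gcongr
    have a2 : (νmin * d * r ^ δ) * ((1 - θ) * r) ≤ (νmin * d * r ^ δ) * ((2 + MG) * d) := by
      gcongr
    have a3 : (2 * (2 + MG)) * (pmin * (1 - θ) * d * r ^ κ) <
        (2 * (2 + MG)) * (νmin * r ^ δ / 2 * d ^ 2) := by
      rw [e1]; linarith
    have a4 := lt_of_mul_lt_mul_left a3 (by positivity)
    linarith
  · rw [lt_div_iff₀ hppos]
    have hq : r ^ qq = r ^ (qq - δ) * r ^ δ := by
      rw [← Real.rpow_add hr]; congr 1; ring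
    have a1 : Lh * d ^ 3 ≤ (Lh * c4 * c2) * r ^ (qq - δ) * (r ^ δ * d ^ 2) := by
      have : Lh * d ^ 2 * d ≤ Lh * d ^ 2 * (c4 * (c2 * r ^ qq)) := by gcongr; exact hdh.trans (by gcongr)
      rw [hq] at this
      nlinarith
    have a2 : (Lh * c4 * c2) * r ^ (qq - δ) * (r ^ δ * d ^ 2) <
        (1 - c₁) * νmin / 2 * (r ^ δ * d ^ 2) := by gcongr
    have a3 : (1 - c₁) * (νmin * r ^ δ / 2 * d ^ 2) ≤ (1 - c₁) * pred := by
      gcongr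
    have a4 := (abs_le.1 hared).1
    nlinarith

set_option maxHeartbeats 4000000 in
lemma one_step {n m : ℕ}
    (ψ : EuclideanSpace ℝ (Fin m) → ℝ)
    (A : EuclideanSpace ℝ (Fin n) →L[ℝ] EuclideanSpace ℝ (Fin m))
    (b : EuclideanSpace ℝ (Fin m))
    (φ : EuclideanSpace ℝ (Fin n) → ℝ)
    (hψ : ContDiff ℝ 2 ψ) (hφ : ConvexOn ℝ Set.univ φ)
    (f : EuclideanSpace ℝ (Fin n) → ℝ)
    (hf : ∀ y, f y = ψ (A y - b))
    (c₁ η θ α a νmin νbar δ τ pmin κ : ℝ)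
    (hc₁ : 0 < c₁) (hc₁' : c₁ < 1)
    (hη : 0 < η) (hθ : 0 < θ) (hθ' : θ < 1)
    (hα : 0 < α) (ha : 1 ≤ a)
    (hνmin : 0 < νmin) (hνb : νmin ≤ νbar)
    (hδ0 : 0 < δ) (hτ : δ ≤ τ)
    (hpmin : 0 < pmin) (hκ : 1 + δ < κ)
    (Xstar : Set (EuclideanSpace ℝ (Fin n)))
    (hXstar : Xstar = {y | -gradient f y ∈ subdiff φ y ∧
        ∀ u, 0 ≤ ⟪(fderiv ℝ (gradient ψ) (A y - b)) u, u⟫})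
    (xstar : EuclideanSpace ℝ (Fin n)) (hxstar : xstar ∈ Xstar)
    (ε Lψ : ℝ) (hε : 0 < ε) (hLψ : 0 < Lψ)
    (hlipψ : ∀ u ∈ closedBall xstar ε, ∀ v ∈ closedBall xstar ε,
      ‖fderiv ℝ (gradient ψ) (A u - b) - fderiv ℝ (gradient ψ) (A v - b)‖ ≤ Lψ * ‖A u - A v‖)
    (β qq : ℝ) (hβ : 0 < β) (hqδ : δ < qq) (hqδ' : 1 - δ < qq)
    (herrbd : ∀ y ∈ closedBall xstar ε, β * infDist y Xstar ≤ ‖resid f φ y‖ ^ qq)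
    (hqq' : 1 < (1 + δ) * qq) :
    ∃ C > (0 : ℝ), ∃ ε₁ > (0 : ℝ), ∀ x xh : EuclideanSpace ℝ (Fin n), ∀ Λ ν μ : ℝ,
      ∀ G : EuclideanSpace ℝ (Fin n) →L[ℝ] EuclideanSpace ℝ (Fin n),
      ‖x - xstar‖ ≤ ε₁ → resid f φ x ≠ 0 → νmin ≤ ν → ν ≤ νbar →
      μ = ν * ‖resid f φ x‖ ^ δ →
      Λ = a * max (-(lambdaMin (fderiv ℝ (gradient ψ) (A x - b)))) 0 →
      G = fderiv ℝ (gradient f) x + Λ • ((ContinuousLinearMap.adjoint A).comp A)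
        + μ • ContinuousLinearMap.id ℝ (EuclideanSpace ℝ (Fin n)) →
      ‖xh - proxPt φ (xh - gradient f x - G (xh - x))‖ ≤
        θ * min ‖resid f φ x‖ (‖resid f φ x‖ ^ (1 + τ)) →
      α * μ / 2 * ‖xh - x‖ ^ 2 ≤ f x + φ x - (f x + ⟪gradient f x, xh - x⟫
        + (1 / 2) * ⟪xh - x, G (xh - x)⟫ + φ xh) →
      ‖xh - x‖ ≤ C * infDist x Xstar ∧
      ‖resid f φ xh‖ ≤ C * ‖resid f φ x‖ ^ min (1 + τ) (δ + qq) ∧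
      ‖resid f φ xh‖ ≤ η * ‖resid f φ x‖ ∧
      infDist xh Xstar ≤ C * infDist x Xstar ^ ((1 + δ) * qq) ∧
      infDist xh Xstar ≤ 1 / 2 * infDist x Xstar ∧
      ‖resid f φ x‖ ≤ C * ‖x - xstar‖ ∧
      (∀ pred ared : ℝ,
        pred = f x + φ x - (f x + ⟪gradient f x, xh - x⟫
        + (1 / 2) * ⟪xh - x, (fderiv ℝ (gradient f) x) (xh - x)⟫ + φ xh) →
        ared = f x + φ x - (f xh + φ xh) →
        pmin * (1 - θ) * ‖xh - x‖ * min ‖resid f φ x‖ (‖resid f φ x‖ ^ κ) < pred ∧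
        c₁ < ared / pred) := by
  obtain ⟨hg1, hg2, hHess⟩ := grad_comp hψ hf
  set nA := ‖A‖ with hnA
  have hnA0 : 0 ≤ nA := norm_nonneg _
  have hadj : ‖ContinuousLinearMap.adjoint A‖ = nA := by
    rw [hnA]; exact LinearIsometryEquiv.norm_map _ A
  have hAA : ‖(ContinuousLinearMap.adjoint A).comp A‖ ≤ nA ^ 2 := by
    refine (ContinuousLinearMap.opNorm_comp_le _ _).trans ?_
    rw [hadj, sq]
  obtain ⟨Lh, hLh⟩ : ∃ t : ℝ, t = nA ^ 3 * Lψ := ⟨_, rfl⟩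
  have hLh0 : 0 ≤ Lh := by rw [hLh]; positivity
  have hAsub : ∀ u v, ‖A u - A v‖ ≤ nA * ‖u - v‖ := fun u v => by
    rw [← map_sub]; exact A.le_opNorm _
  have hlipf : ∀ u ∈ closedBall xstar ε, ∀ v ∈ closedBall xstar ε,
      ‖fderiv ℝ (gradient f) u - fderiv ℝ (gradient f) v‖ ≤ Lh * ‖u - v‖ := by
    intro u hu v hv
    rw [hHess, hHess, ← ContinuousLinearMap.comp_sub, ← ContinuousLinearMap.sub_comp]
    calc _ ≤ nA * (‖fderiv ℝ (gradient ψ) (A u - b) - fderiv ℝ (gradient ψ) (A v - b)‖ * nA) := by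
          refine (ContinuousLinearMap.opNorm_comp_le _ _).trans ?_
          rw [hadj]
          gcongr
          exact ContinuousLinearMap.opNorm_comp_le _ _
      _ ≤ nA * ((Lψ * (nA * ‖u - v‖)) * nA) := by
          gcongr
          exact (hlipψ u hu v hv).trans (by gcongr; exact hAsub u v)
      _ = _ := by rw [hLh]; ring
  have hcalc := calc_pack hg1 hg2 (convex_closedBall xstar ε) hLh0 hlipf
  have hxs : xstar ∈ closedBall xstar ε := mem_closedBall_self hε.le
  obtain ⟨M, hM⟩ : ∃ t : ℝ, t = ‖fderiv ℝ (gradient f) xstar‖ + Lh * ε := ⟨_, rfl⟩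
  have hM0 : 0 ≤ M := by rw [hM]; positivity
  have hHb : ∀ u ∈ closedBall xstar ε, ‖fderiv ℝ (gradient f) u‖ ≤ M := by
    intro u hu
    have h1 := hlipf u hu xstar hxs
    have h2 : ‖u - xstar‖ ≤ ε := by simpa [dist_eq_norm] using hu
    have h3 := norm_le_norm_add_norm_sub' (fderiv ℝ (gradient f) u) (fderiv ℝ (gradient f) xstar)
    have h4 : Lh * ‖u - xstar‖ ≤ Lh * ε := by gcongr
    rw [hM]; linarith
  have hgl : ∀ u ∈ closedBall xstar ε, ∀ v ∈ closedBall xstar ε,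
      ‖gradient f u - gradient f v‖ ≤ M * ‖u - v‖ := fun u hu v hv =>
    (convex_closedBall xstar ε).norm_image_sub_le_of_norm_hasFDerivWithin_le
      (fun z _ => (hg2 z).hasFDerivWithinAt) hHb hv hu
  have hres : ∀ u ∈ closedBall xstar ε, ∀ y ∈ closedBall xstar ε, y ∈ Xstar →
      ‖resid f φ u‖ ≤ (2 + M) * ‖u - y‖ := by
    intro u hu y hy hyX
    rw [hXstar] at hyX
    exact resid_lip hφ hyX.1 (hgl u hu y hy)
  obtain ⟨c1, hc1⟩ : ∃ t : ℝ, t = 2 + M := ⟨_, rfl⟩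
  rw [← hc1] at hres
  have hc1p : 0 < c1 := by rw [hc1]; positivity
  obtain ⟨c2, hc2⟩ : ∃ t : ℝ, t = 2 / β := ⟨_, rfl⟩
  have hc20 : 0 < c2 := by rw [hc2]; positivity
  obtain ⟨cB, hcB⟩ : ∃ t : ℝ, t = a * Lψ * nA * nA ^ 2 := ⟨_, rfl⟩
  have ha0 : 0 < a := by linarith
  have hcB0 : 0 ≤ cB := by rw [hcB]; positivity
  have hνbar : 0 < νbar := by linarith
  obtain ⟨MG, hMG⟩ : ∃ t : ℝ, t = M + cB * (2 * ε) + νbar := ⟨_, rfl⟩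
  have hMG0 : 0 ≤ MG := by rw [hMG]; positivity
  obtain ⟨c3, hc3⟩ : ∃ t : ℝ, t = c1 + ((MG + 1) * c1 + 2 * ((Lh + cB) * c2 + νbar)) / νmin := ⟨_, rfl⟩
  have hc30 : 0 ≤ c3 := by rw [hc3]; positivity
  obtain ⟨c4, hc4⟩ : ∃ t : ℝ, t = c3 + 1 := ⟨_, rfl⟩
  have hc40 : 0 < c4 := by rw [hc4]; positivity
  obtain ⟨c5, hc5⟩ : ∃ t : ℝ, t = (Lh * c4 ^ 2 + cB * c4) * c2 + νbar * c4 := ⟨_, rfl⟩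
  have hc50 : 0 ≤ c5 := by rw [hc5]; positivity
  obtain ⟨c6, hc6⟩ : ∃ t : ℝ, t = (c1 + c5) * c1 ^ δ := ⟨_, rfl⟩
  have hc60 : 0 ≤ c6 := by rw [hc6]; positivity
  obtain ⟨c8, hc8⟩ : ∃ t : ℝ, t = 1 + c5 * c2 := ⟨_, rfl⟩
  have hc80 : 0 < c8 := by rw [hc8]; positivity
  obtain ⟨c9, hc9⟩ : ∃ t : ℝ, t = 1 / β * (c6 * 2 ^ (1 + δ)) ^ qq := ⟨_, rfl⟩
  have hc90 : 0 ≤ c9 := by rw [hc9]; positivity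
  set ρ := min (1 + τ) (δ + qq) with hρ
  have hρ1 : 1 < ρ := lt_min (by linarith) (by linarith)
  have hqq0 : 0 < qq := by linarith
  clear_value nA ρ
  obtain ⟨r1, hr1, hs1⟩ := rpow_small (2 * pmin * (2 + MG)) (κ - (1 + δ)) νmin (by linarith) hνmin
  obtain ⟨r2, hr2, hs2⟩ := rpow_small (Lh * c4 * c2) (qq - δ) ((1 - c₁) * νmin / 2)
    (by linarith) (by have : 0 < 1 - c₁ := by linarith
                      positivity)
  obtain ⟨r3, hr3, hs3⟩ := rpow_small c8 (ρ - 1) η (by linarith) hη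
  obtain ⟨r4, hr4, hs4⟩ := rpow_small c9 ((1 + δ) * qq - 1) (1 / 2) (by linarith) (by norm_num)
  obtain ⟨r0, hr0⟩ : ∃ t : ℝ, t = min 1 (min r1 (min r2 r3)) := ⟨_, rfl⟩
  have hr0p : 0 < r0 := by rw [hr0]; positivity
  have hr0a : r0 ≤ 1 := by rw [hr0]; exact min_le_left _ _
  have hr0b : r0 ≤ r1 := by rw [hr0]; exact (min_le_right _ _).trans (min_le_left _ _)
  have hr0c : r0 ≤ r2 := by rw [hr0]; exact (min_le_right _ _).trans ((min_le_right _ _).trans (min_le_left _ _))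
  have hr0d : r0 ≤ r3 := by rw [hr0]; exact (min_le_right _ _).trans ((min_le_right _ _).trans (min_le_right _ _))
  refine ⟨2 * c4 + c8 + c9 + c1, by positivity,
    min (r0 / c1) (min r4 (ε / (3 + 2 * c4))), by positivity, ?_⟩
  intro x xh Λ ν μ G hx hrne hν1 hν2 hμ hΛ hG he hqh
  set r := ‖resid f φ x‖ with hr
  have hrp : 0 < r := norm_pos_iff.2 hrne
  set D := infDist x Xstar with hD
  have hx1 : ‖x - xstar‖ ≤ r0 / c1 := hx.trans (min_le_left _ _)
  have hx2 : ‖x - xstar‖ ≤ r4 := hx.trans ((min_le_right _ _).trans (min_le_left _ _))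
  have hx3 : ‖x - xstar‖ * (3 + 2 * c4) ≤ ε := by
    rw [← le_div_iff₀ (by positivity)]
    exact hx.trans ((min_le_right _ _).trans (min_le_right _ _))
  have hxn : 0 ≤ ‖x - xstar‖ := norm_nonneg _
  have hxc : 0 ≤ ‖x - xstar‖ * c4 := by positivity
  have hxε : x ∈ closedBall xstar ε := by
    rw [mem_closedBall, dist_eq_norm]; linarith
  have hrx : r ≤ c1 * ‖x - xstar‖ := hres x hxε xstar hxs hxstar
  have hr0' : r ≤ r0 := by
    rw [le_div_iff₀ hc1p] at hx1; linarith
  have hrle1 : r ≤ 1 := hr0'.trans hr0a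
  have hrr1 : r ≤ r1 := hr0'.trans hr0b
  have hrr2 : r ≤ r2 := hr0'.trans hr0c
  have hrr3 : r ≤ r3 := hr0'.trans hr0d
  have hD0 : 0 ≤ D := infDist_nonneg
  have hDx : D ≤ ‖x - xstar‖ := by rw [← dist_eq_norm]; exact infDist_le_dist_of_mem hxstar
  have hxpos : 0 < ‖x - xstar‖ := by
    by_contra hcon
    have : ‖x - xstar‖ = 0 := le_antisymm (not_lt.1 hcon) hxn
    rw [this] at hrx; linarith
  have hnear : ∀ y, ‖x - y‖ ≤ 2 * ‖x - xstar‖ → y ∈ closedBall xstar ε := by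
    intro y hy
    rw [mem_closedBall, dist_eq_norm]
    have := norm_sub_le_norm_sub_add_norm_sub y x xstar
    rw [norm_sub_rev y x] at this
    linarith
  have hDpos : 0 < D := by
    by_contra hcon
    have hD00 : D = 0 := le_antisymm (not_lt.1 hcon) hD0
    have : infDist x Xstar < min (r / c1) ‖x - xstar‖ := by
      rw [← hD, hD00]; positivity
    obtain ⟨y, hyX, hy⟩ := (infDist_lt_iff ⟨xstar, hxstar⟩).1 this
    rw [dist_eq_norm] at hy
    have hy1 := hy.trans_le (min_le_left _ _)
    have hy2 := hy.trans_le (min_le_right _ _)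
    have := hres x hxε y (hnear y (by linarith)) hyX
    rw [lt_div_iff₀ hc1p] at hy1
    linarith
  obtain ⟨y, hyX, hy⟩ := (infDist_lt_iff (r := 2 * D) (x := x) ⟨xstar, hxstar⟩).1 (by linarith)
  rw [dist_eq_norm] at hy
  have hyε : y ∈ closedBall xstar ε := hnear y (by linarith)
  set h := ‖x - y‖ with hh
  have hh0 : 0 ≤ h := norm_nonneg _
  have hyx : ‖y - x‖ = h := norm_sub_rev _ _
  have hrh : r ≤ c1 * h := hres x hxε y hyε hyX
  have hβD : β * D ≤ r ^ qq := herrbd x hxε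
  have hhr : h ≤ c2 * r ^ qq := by
    have : D ≤ r ^ qq / β := by rw [le_div_iff₀ hβ]; linarith
    calc h ≤ 2 * D := hy.le
      _ ≤ 2 * (r ^ qq / β) := by gcongr
      _ = _ := by rw [hc2]; ring
  have hrd : 0 < r ^ δ := Real.rpow_pos_of_pos hrp _
  have hrd1 : r ^ δ ≤ 1 := Real.rpow_le_one hrp.le hrle1 hδ0.le
  have hμ1 : νmin * r ^ δ ≤ μ := by rw [hμ]; gcongr
  have hμ2 : μ ≤ νbar * r ^ δ := by rw [hμ]; gcongr
  have hμ0 : 0 < μ := lt_of_lt_of_le (by positivity) hμ1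
  have hyX' := hyX
  rw [hXstar] at hyX'
  have hΛ1 : Λ ≤ a * (Lψ * (nA * h)) := by
    rw [hΛ]
    gcongr
    refine (neg_lambdaMin_le _ _ hyX'.2).trans ((hlipψ x hxε y hyε).trans ?_)
    gcongr
    exact hAsub x y
  have hΛ0 : 0 ≤ Λ := by rw [hΛ]; exact mul_nonneg ha0.le (le_max_right _ _)
  set B := Λ • ((ContinuousLinearMap.adjoint A).comp A) with hB
  have hBn : ‖B‖ ≤ cB * h := by
    rw [hB, norm_smul, Real.norm_of_nonneg hΛ0]
    calc _ ≤ (a * (Lψ * (nA * h))) * nA ^ 2 := by gcongr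
      _ = _ := by rw [hcB]; ring
  have hBinner : ∀ u, ⟪B u, u⟫ = Λ * ‖A u‖ ^ 2 := by
    intro u
    rw [hB, smul_apply, real_inner_smul_left, ContinuousLinearMap.comp_apply,
      ContinuousLinearMap.adjoint_inner_left, real_inner_self_eq_norm_sq]
  set Hf := fderiv ℝ (gradient f) x with hHf
  have hGinner : ∀ u, ⟪G u, u⟫ = ⟪Hf u, u⟫ + Λ * ‖A u‖ ^ 2 + μ * ‖u‖ ^ 2 := by
    intro u
    rw [hG, ← hBinner]
    simp only [add_apply, smul_apply, ContinuousLinearMap.id_apply, inner_add_left,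
      real_inner_smul_left, real_inner_self_eq_norm_sq]
  have hpsd : ∀ u, μ * ‖u‖ ^ 2 ≤ ⟪G u, u⟫ := by
    intro u
    rw [hGinner]
    have h1 : ⟪Hf u, u⟫ = ⟪fderiv ℝ (gradient ψ) (A x - b) (A u), A u⟫ := by
      rw [hHf, hHess, ContinuousLinearMap.comp_apply, ContinuousLinearMap.adjoint_inner_left,
        ContinuousLinearMap.comp_apply]
    have h2 := lambdaMin_le (fderiv ℝ (gradient ψ) (A x - b)) (A u)
    have h3 : -lambdaMin (fderiv ℝ (gradient ψ) (A x - b)) ≤ Λ := by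
      rw [hΛ]
      exact (le_max_left _ _).trans (le_mul_of_one_le_left (le_max_right _ _) ha)
    have h4 := mul_le_mul_of_nonneg_right h3 (sq_nonneg ‖A u‖)
    rw [h1]
    linarith
  have hh2ε : h ≤ 2 * ε := by linarith
  have hGn : ‖G‖ ≤ MG := by
    have n1 := norm_add_le (Hf + B) (μ • ContinuousLinearMap.id ℝ (EuclideanSpace ℝ (Fin n)))
    have n2 := norm_add_le Hf B
    have n3 : ‖μ • ContinuousLinearMap.id ℝ (EuclideanSpace ℝ (Fin n))‖ ≤ νbar := by
      rw [norm_smul, Real.norm_of_nonneg hμ0.le]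
      calc μ * _ ≤ μ * 1 := by gcongr; exact ContinuousLinearMap.norm_id_le
        _ ≤ νbar * r ^ δ := by linarith
        _ ≤ νbar * 1 := by gcongr
        _ = νbar := mul_one _
    have n4 := hHb x hxε
    have n5 : cB * h ≤ cB * (2 * ε) := by gcongr
    rw [hG, hMG]
    linarith
  set e := xh - proxPt φ (xh - gradient f x - G (xh - x)) with hedef
  have heθ : ‖e‖ ≤ θ * r := he.trans (by gcongr; exact min_le_left _ _)
  have he1 : ‖e‖ ≤ r := heθ.trans (mul_le_of_le_one_left hrp.le hθ'.le)
  have he2 : ‖e‖ ≤ r ^ (1 + τ) := by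
    refine he.trans ?_
    calc _ ≤ 1 * r ^ (1 + τ) := by gcongr; exact min_le_right _ _
      _ = _ := one_mul _
  have hstepA := step_A hφ hyX'.1 Hf B G hμ0.le hG (hcalc x hxε y hyε).1
    (by rw [hyx]; exact hBn) hGn hpsd hedef
  rw [hyx] at hstepA
  obtain ⟨hu, hh2, he3⟩ := real_step c1 c2 (Lh + cB) MG νmin νbar δ τ qq r h μ ‖e‖ ‖xh - y‖
    hc1p.le (by positivity) hMG0 hνmin hνbar.le hτ hqδ.le hrp hrle1 hh0 hrh hhr hc20.le
    hμ1 hμ2 he1 he2 (norm_nonneg _) hstepA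
  set dn := ‖xh - x‖ with hdn
  have hdn0 : 0 ≤ dn := norm_nonneg _
  have hdh : dn ≤ c4 * h := by
    have := norm_sub_le_norm_sub_add_norm_sub xh y x
    rw [hyx] at this
    rw [← hc3] at hu
    rw [hc4, add_mul, one_mul]; linarith
  have hdD : dn ≤ c4 * (2 * D) := hdh.trans (by gcongr)
  have hxhε : xh ∈ closedBall xstar ε := by
    rw [mem_closedBall, dist_eq_norm]
    have := norm_sub_le_norm_sub_add_norm_sub xh x xstar
    have : c4 * (2 * D) ≤ c4 * (2 * ‖x - xstar‖) := by gcongr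
    linarith
  have hstepB := step_B hφ Hf B G hμ0.le hG (hcalc x hxε xh hxhε).1 hBn hedef
  obtain ⟨hR1, hR2⟩ := real_res c1 c2 c4 Lh cB νbar δ τ qq r h μ ‖e‖ dn ‖resid f φ xh‖ hc1p.le
    hLh0 hcB0 hνbar.le hc40.le hδ0.le hrp hrle1 hh0 hrh hhr hc20.le hh2 he3 hμ2 hdn0 hdh he2 hstepB
  rw [← hc5, ← hc8, ← hρ] at hR1
  rw [← hc5, ← hc6] at hR2
  have hrρ : r ^ ρ = r ^ (ρ - 1) * r := by
    rw [← Real.rpow_add_one hrp.ne']; congr 1; ring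
  have hDpow : D ^ ((1 + δ) * qq) = D ^ ((1 + δ) * qq - 1) * D := by
    rw [← Real.rpow_add_one hDpos.ne']; congr 1; ring
  have hR3 : ‖resid f φ xh‖ ≤ c6 * 2 ^ (1 + δ) * D ^ (1 + δ) := by
    calc _ ≤ c6 * h ^ (1 + δ) := hR2
      _ ≤ c6 * (2 * D) ^ (1 + δ) := by gcongr
      _ = _ := by rw [Real.mul_rpow (by norm_num) hD0]; ring
  have hDh : infDist xh Xstar ≤ c9 * D ^ ((1 + δ) * qq) := by
    have h1 := herrbd xh hxhε
    have h2 : ‖resid f φ xh‖ ^ qq ≤ (c6 * 2 ^ (1 + δ)) ^ qq * D ^ ((1 + δ) * qq) := by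
      calc _ ≤ (c6 * 2 ^ (1 + δ) * D ^ (1 + δ)) ^ qq := by gcongr
        _ = _ := by
          rw [Real.mul_rpow (by positivity) (by positivity), ← Real.rpow_mul hD0]
    have h3 : infDist xh Xstar ≤ ((c6 * 2 ^ (1 + δ)) ^ qq * D ^ ((1 + δ) * qq)) / β := by
      rw [le_div_iff₀ hβ]; linarith
    rw [hc9]
    calc _ ≤ _ := h3
      _ = _ := by ring
  have hDpw0 : 0 ≤ D ^ ((1 + δ) * qq) := by positivity
  have hrρ0 : 0 ≤ r ^ ρ := by positivity
  refine ⟨?_, ?_, ?_, ?_, ?_, ?_, ?_⟩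
  · linarith [mul_nonneg hc80.le hD0, mul_nonneg hc90 hD0, mul_nonneg hc1p.le hD0]
  · refine hR1.trans ?_
    gcongr
    linarith
  · calc _ ≤ c8 * r ^ ρ := hR1
      _ = (c8 * r ^ (ρ - 1)) * r := by rw [hrρ]; ring
      _ ≤ η * r := by
        gcongr
        exact (hs3 r hrp.le hrr3).le
  · refine hDh.trans ?_
    gcongr
    linarith
  · calc _ ≤ c9 * D ^ ((1 + δ) * qq) := hDh
      _ = (c9 * D ^ ((1 + δ) * qq - 1)) * D := by rw [hDpow]; ring
      _ ≤ 1 / 2 * D := by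
        gcongr
        exact (hs4 D hD0 (hDx.trans hx2)).le
  · refine hrx.trans ?_
    gcongr
    linarith
  · intro pred ared hpred hared
    refine real_succ c2 c4 Lh MG νmin δ qq κ pmin θ c₁ r h μ dn pred ared hLh0 hMG0 hνmin hc40.le
      hθ' hpmin hc₁ hc₁' hrp hhr hμ1 hdh hdn0 (step_C hφ G hGn hedef heθ) ?_ ?_
      (hs1 r hrp.le hrr1) (hs2 r hrp.le hrr2)
    · have h1 := hGinner (xh - x)
      rw [real_inner_comm] at h1
      rw [real_inner_comm (xh - x) (Hf (xh - x))] at h1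
      rw [h1] at hqh
      rw [hpred]
      have h2 : 0 ≤ Λ * ‖A (xh - x)‖ ^ 2 := by positivity
      have h3 : 0 ≤ α * μ / 2 * dn ^ 2 := by positivity
      linarith
    · have h1 := (hcalc x hxε xh hxhε).2
      have : ared - pred = -(f xh - f x - ⟪gradient f x, xh - x⟫
        - 1 / 2 * ⟪xh - x, Hf (xh - x)⟫) := by rw [hpred, hared]; ring
      rw [this, abs_neg]
      exact h1

/-- Corollary 5.8: if additionally `q > 1/(1+δ)`, then `{xᵏ}` converges to `x*`, `{‖r(xᵏ)‖}`
converges to `0` with order `ρ = min{1+τ, δ+q} > 1`, and `{dist(xᵏ, X*)}` converges to `0`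
with order `(1+δ)q > 1`. -/
theorem stmt_19 {n m : ℕ}
    -- problem data: f(x) = ψ(Ax − b), F = f + φ bounded below, φ convex, ψ C²
    (ψ : EuclideanSpace ℝ (Fin m) → ℝ)
    (A : EuclideanSpace ℝ (Fin n) →L[ℝ] EuclideanSpace ℝ (Fin m))
    (b : EuclideanSpace ℝ (Fin m))
    (φ : EuclideanSpace ℝ (Fin n) → ℝ)
    (hψ : ContDiff ℝ 2 ψ) (hφ : ConvexOn ℝ Set.univ φ)
    (f F : EuclideanSpace ℝ (Fin n) → ℝ)
    (hf : ∀ y, f y = ψ (A y - b)) (hF : ∀ y, F y = f y + φ y)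
    (hFbdd : BddBelow (Set.range F))
    -- algorithm parameters
    (c₁ c₂ σ₁ σ₂ η θ α a νmin ν₀ νbar δ τ pmin κ : ℝ)
    (hc₁ : 0 < c₁) (hc₁' : c₁ < 1) (hc₂ : c₁ < c₂) (hc₂' : c₂ < 1)
    (hσ₁ : 0 < σ₁) (hσ₁' : σ₁ < 1) (hσ₂ : 1 < σ₂)
    (hη : 0 < η) (hη' : η < 1) (hθ : 0 < θ) (hθ' : θ < 1)
    (hα : 0 < α) (hα' : α < 1) (ha : 1 ≤ a)
    (hνmin : 0 < νmin) (hν₀a : νmin ≤ ν₀) (hν₀b : ν₀ ≤ νbar)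
    (hδ0 : 0 < δ) (hδ1 : δ ≤ 1) (hτ : δ ≤ τ)
    (hpmin : 0 < pmin) (hpmin' : pmin < 1 / 2) (hκ : 1 + δ < κ)
    -- iterates and regularization sequences
    (x xhat : ℕ → EuclideanSpace ℝ (Fin n)) (ν rbar μ : ℕ → ℝ)
    (hν0 : ν 0 = ν₀) (hrbar0 : rbar 0 = ‖resid f φ (x 0)‖)
    (hμ : ∀ k, μ k = ν k * rbar k ^ δ)
    -- Λ_k, H_k + μ_k I =: G_k, the models q_k, q̂_k, and the subproblem residual R_k
    (Λ : ℕ → ℝ)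
    (hΛ : ∀ k, Λ k = a * max (-(lambdaMin (fderiv ℝ (gradient ψ) (A (x k) - b)))) 0)
    (G : ℕ → EuclideanSpace ℝ (Fin n) →L[ℝ] EuclideanSpace ℝ (Fin n))
    (hG : ∀ k, G k = fderiv ℝ (gradient f) (x k)
        + Λ k • ((ContinuousLinearMap.adjoint A).comp A)
        + μ k • ContinuousLinearMap.id ℝ (EuclideanSpace ℝ (Fin n)))
    (q qhat : ℕ → EuclideanSpace ℝ (Fin n) → ℝ)
    (hq : ∀ k y, q k y = f (x k) + ⟪gradient f (x k), y - x k⟫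
        + (1 / 2) * ⟪y - x k, (fderiv ℝ (gradient f) (x k)) (y - x k)⟫ + φ y)
    (hqhat : ∀ k y, qhat k y = f (x k) + ⟪gradient f (x k), y - x k⟫
        + (1 / 2) * ⟪y - x k, (G k) (y - x k)⟫ + φ y)
    (R : ℕ → EuclideanSpace ℝ (Fin n) → EuclideanSpace ℝ (Fin n))
    (hR : ∀ k y, R k y = y - proxPt φ (y - gradient f (x k) - (G k) (y - x k)))
    -- the inexactness criteria satisfied by x̂ᵏ
    (hinex1 : ∀ k, ‖R k (xhat k)‖ ≤
        θ * min ‖resid f φ (x k)‖ (‖resid f φ (x k)‖ ^ (1 + τ)))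
    (hinex2 : ∀ k, α * μ k / 2 * ‖xhat k - x k‖ ^ 2 ≤ F (x k) - qhat k (xhat k))
    -- dᵏ, pred_k, ared_k, ρ_k
    (d : ℕ → EuclideanSpace ℝ (Fin n)) (hd : ∀ k, d k = xhat k - x k)
    (pred ared ρ : ℕ → ℝ)
    (hpred : ∀ k, pred k = F (x k) - q k (xhat k))
    (hared : ∀ k, ared k = F (x k) - F (xhat k))
    (hρ : ∀ k, ρ k = ared k / pred k)
    -- update rules (unsuccessful / successful / highly successful iterations)
    (unsucc : ℕ → Prop)
    (hunsucc : ∀ k, unsucc k ↔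
        pred k ≤ pmin * (1 - θ) * ‖d k‖ *
          min ‖resid f φ (x k)‖ (‖resid f φ (x k)‖ ^ κ) ∨ ρ k ≤ c₁)
    (hupd : ∀ k,
        (unsucc k → x (k + 1) = x k ∧ ν (k + 1) = σ₂ * ν k) ∧
        (¬unsucc k → x (k + 1) = xhat k ∧
          (ρ k ≤ c₂ → ν (k + 1) = min (ν k) νbar) ∧
          (c₂ < ρ k → ν (k + 1) = min (max (σ₁ * ν k) νmin) νbar)))
    (hrbarupd : ∀ k,
        (‖resid f φ (x (k + 1))‖ ≤ η * rbar k → rbar (k + 1) = ‖resid f φ (x (k + 1))‖) ∧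
        (¬‖resid f φ (x (k + 1))‖ ≤ η * rbar k → rbar (k + 1) = rbar k))
    -- no iterate is stationary (otherwise the algorithm terminates)
    (hrne : ∀ k, resid f φ (x k) ≠ 0)
    -- the index set K
    (K : Set ℕ)
    (hK : K = {0} ∪ {k | 1 ≤ k ∧ ‖resid f φ (x k)‖ ≤ η * rbar (k - 1)})
    -- local assumptions: X* = set of strongly stationary points, x* an accumulation
    -- point of {xᵏ}_{k∈K} lying in X*
    (Xstar : Set (EuclideanSpace ℝ (Fin n)))
    (hXstar : Xstar = {y | -gradient f y ∈ subdiff φ y ∧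
        ∀ u, 0 ≤ ⟪(fderiv ℝ (gradient ψ) (A y - b)) u, u⟫})
    (hXne : Xstar.Nonempty)
    (xstar : EuclideanSpace ℝ (Fin n)) (hxstar : xstar ∈ Xstar)
    (hacc : MapClusterPt xstar (atTop ⊓ 𝓟 K) x)
    -- local Lipschitz continuity of ∇²ψ near x*
    (ε Lψ : ℝ) (hε : 0 < ε) (hLψ : 0 < Lψ)
    (hlipψ : ∀ u ∈ closedBall xstar ε, ∀ v ∈ closedBall xstar ε,
      ‖fderiv ℝ (gradient ψ) (A u - b) - fderiv ℝ (gradient ψ) (A v - b)‖ ≤ Lψ * ‖A u - A v‖)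
    -- Hölderian local error bound of order qq on X*
    (β qq : ℝ) (hβ : 0 < β) (hqq : max δ (1 - δ) < qq)
    (herrbd : ∀ y ∈ closedBall xstar ε, β * infDist y Xstar ≤ ‖resid f φ y‖ ^ qq)
    -- derived constants: ε₀, L = ‖A‖³Lψ, and a Lipschitz constant L_g of ∇f on B_{ε₀}(x*)
    (ε₀ L Lg : ℝ) (hε₀ : ε₀ = min ε (ε / ‖A‖)) (hL : L = ‖A‖ ^ 3 * Lψ) (hLg : 0 < Lg)
    (hlipg : ∀ u ∈ closedBall xstar ε₀, ∀ v ∈ closedBall xstar ε₀,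
      ‖gradient f u - gradient f v‖ ≤ Lg * ‖u - v‖)
    (hqq' : 1 / (1 + δ) < qq) :
    Tendsto x atTop (nhds xstar) ∧
    1 < min (1 + τ) (δ + qq) ∧
    Tendsto (fun k => ‖resid f φ (x k)‖) atTop (nhds 0) ∧
    (∃ C > (0 : ℝ), ∃ k₀ : ℕ, ∀ k ≥ k₀,
      ‖resid f φ (x (k + 1))‖ ≤ C * ‖resid f φ (x k)‖ ^ min (1 + τ) (δ + qq)) ∧
    1 < (1 + δ) * qq ∧
    Tendsto (fun k => infDist (x k) Xstar) atTop (nhds 0) ∧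
    ∃ C > (0 : ℝ), ∃ k₀ : ℕ, ∀ k ≥ k₀,
      infDist (x (k + 1)) Xstar ≤ C * infDist (x k) Xstar ^ ((1 + δ) * qq) := by
  have h1δ : 0 < 1 + δ := by linarith
  have hqq1 : 1 < (1 + δ) * qq := by
    rw [div_lt_iff₀ h1δ] at hqq'; linarith
  have hqδ : δ < qq := (le_max_left _ _).trans_lt hqq
  have hqδ' : 1 - δ < qq := (le_max_right _ _).trans_lt hqq
  obtain ⟨C, hC, ε₁, hε₁, hstep⟩ := one_step ψ A b φ hψ hφ f hf c₁ η θ α a νmin νbar δ τ pmin κ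
    hc₁ hc₁' hη hθ hθ' hα ha hνmin (hν₀a.trans hν₀b) hδ0 hτ hpmin hκ Xstar hXstar xstar hxstar
    ε Lψ hε hLψ hlipψ β qq hβ hqδ hqδ' herrbd hqq1
  have hrpos : ∀ k, 0 < ‖resid f φ (x k)‖ := fun k => norm_pos_iff.2 (hrne k)
  have hνlow : ∀ k, νmin ≤ ν k := by
    intro k
    induction k with
    | zero => rw [hν0]; exact hν₀a
    | succ k ih =>
      by_cases hu : unsucc k
      · rw [((hupd k).1 hu).2]
        nlinarith
      · obtain ⟨_, ha1, ha2⟩ := (hupd k).2 hu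
        rcases le_or_gt (ρ k) c₂ with h | h
        · rw [ha1 h]; exact le_min ih (hν₀a.trans hν₀b)
        · rw [ha2 h]; exact le_min (le_max_right _ _) (hν₀a.trans hν₀b)
  have hinv : ∀ k, η * rbar k < ‖resid f φ (x k)‖ := by
    intro k
    cases k with
    | zero => rw [hrbar0]; exact mul_lt_of_lt_one_left (hrpos 0) hη'
    | succ k =>
      by_cases h : ‖resid f φ (x (k + 1))‖ ≤ η * rbar k
      · rw [(hrbarupd k).1 h]; exact mul_lt_of_lt_one_left (hrpos _) hη'
      · rw [(hrbarupd k).2 h]; exact not_le.1 h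
  have hKprop : ∀ k ∈ K, rbar k = ‖resid f φ (x k)‖ ∧ ν k ≤ νbar := by
    intro k hk
    rw [hK] at hk
    rcases hk with hk | ⟨hk1, hk2⟩
    · rw [Set.mem_singleton_iff] at hk
      subst hk
      exact ⟨hrbar0, by rw [hν0]; exact hν₀b⟩
    · obtain ⟨j, rfl⟩ : ∃ j, k = j + 1 := ⟨k - 1, by omega⟩
      rw [Nat.add_sub_cancel] at hk2
      refine ⟨(hrbarupd j).1 hk2, ?_⟩
      by_cases hu : unsucc j
      · rw [((hupd j).1 hu).1] at hk2
        exact absurd (hinv j) (not_lt.2 hk2)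
      · obtain ⟨_, ha1, ha2⟩ := (hupd j).2 hu
        rcases le_or_gt (ρ j) c₂ with h | h
        · rw [ha1 h]; exact min_le_right _ _
        · rw [ha2 h]; exact min_le_right _ _
  have hloc : ∀ k ∈ K, ‖x k - xstar‖ ≤ ε₁ → (k + 1 ∈ K ∧
      ‖x (k + 1) - x k‖ ≤ C * infDist (x k) Xstar ∧
      ‖resid f φ (x (k + 1))‖ ≤ C * ‖resid f φ (x k)‖ ^ min (1 + τ) (δ + qq) ∧
      infDist (x (k + 1)) Xstar ≤ C * infDist (x k) Xstar ^ ((1 + δ) * qq) ∧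
      infDist (x (k + 1)) Xstar ≤ 1 / 2 * infDist (x k) Xstar ∧
      ‖resid f φ (x k)‖ ≤ C * ‖x k - xstar‖) := by
    intro k hk hx
    obtain ⟨hrb, hνk⟩ := hKprop k hk
    have hi1 := hinex1 k
    rw [hR] at hi1
    have hi2 := hinex2 k
    rw [hF, hqhat] at hi2
    obtain ⟨s1, s2, s3, s4, s5, s6, s7⟩ := hstep (x k) (xhat k) (Λ k) (ν k) (μ k) (G k) hx (hrne k)
      (hνlow k) hνk (by rw [hμ, hrb]) (hΛ k) (hG k) hi1 hi2
    obtain ⟨t1, t2⟩ := s7 (pred k) (ared k) (by rw [hpred, hF, hq]) (by rw [hared, hF, hF])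
    have hns : ¬ unsucc k := by
      rw [hunsucc, not_or, not_le, not_le, hd, hρ]
      exact ⟨t1, t2⟩
    have hxk : x (k + 1) = xhat k := ((hupd k).2 hns).1
    rw [hxk]
    refine ⟨?_, s1, s2, s4, s5, s6⟩
    rw [hK]
    right
    refine ⟨by omega, ?_⟩
    rw [Nat.add_sub_cancel, hxk, hrb]
    exact s3
  have hDle : ∀ k, infDist (x k) Xstar ≤ ‖x k - xstar‖ := fun k => by
    rw [← dist_eq_norm]; exact infDist_le_dist_of_mem hxstar
  have htail : ∀ e > 0, ∃ k₀, ∀ k ≥ k₀, k ∈ K ∧ ‖x k - xstar‖ ≤ ε₁ ∧ ‖x k - xstar‖ < e := by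
    intro e he
    set t := min ε₁ (e / 2) with ht
    have htp : 0 < t := by positivity
    have hfr := hacc.frequently (ball_mem_nhds xstar (show 0 < t / (1 + 2 * C) by positivity))
    have hev : ∀ᶠ k in atTop ⊓ 𝓟 K, k ∈ K := mem_inf_of_right (mem_principal_self K)
    obtain ⟨k₀, hk1, hk2⟩ := (hfr.and_eventually hev).exists
    rw [dist_eq_norm, lt_div_iff₀ (by positivity)] at hk1
    have hmain : ∀ j, k₀ + j ∈ K ∧ ‖x (k₀ + j) - xstar‖ ≤ ‖x k₀ - xstar‖ +
        2 * C * (infDist (x k₀) Xstar - infDist (x (k₀ + j)) Xstar) ∧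
        ‖x (k₀ + j) - xstar‖ ≤ t := by
      have hfin : ∀ j, ‖x (k₀ + j) - xstar‖ ≤ ‖x k₀ - xstar‖ +
        2 * C * (infDist (x k₀) Xstar - infDist (x (k₀ + j)) Xstar) →
        ‖x (k₀ + j) - xstar‖ ≤ t := by
        intro j hj
        have h1 := hDle k₀
        have h2 : 0 ≤ infDist (x (k₀ + j)) Xstar := infDist_nonneg
        have h3 : 2 * C * (infDist (x k₀) Xstar - infDist (x (k₀ + j)) Xstar) ≤
            2 * C * ‖x k₀ - xstar‖ := by gcongr; linarith
        linarith
      intro j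
      induction j with
      | zero =>
        have h0 : ‖x (k₀ + 0) - xstar‖ ≤ ‖x k₀ - xstar‖ +
          2 * C * (infDist (x k₀) Xstar - infDist (x (k₀ + 0)) Xstar) := by simp
        exact ⟨hk2, h0, hfin 0 h0⟩
      | succ j ih =>
        obtain ⟨i1, i2, i3⟩ := ih
        obtain ⟨l1, l2, -, -, l5, -⟩ := hloc _ i1 (i3.trans (min_le_left _ _))
        have h0 : ‖x (k₀ + (j + 1)) - xstar‖ ≤ ‖x k₀ - xstar‖ +
          2 * C * (infDist (x k₀) Xstar - infDist (x (k₀ + (j + 1))) Xstar) := by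
          rw [← add_assoc]
          have n1 := norm_sub_le_norm_sub_add_norm_sub (x (k₀ + j + 1)) (x (k₀ + j)) xstar
          have n2 := mul_le_mul_of_nonneg_left l5 hC.le
          linarith
        exact ⟨l1, h0, hfin _ h0⟩
    refine ⟨k₀, fun k hk => ?_⟩
    obtain ⟨j, rfl⟩ := Nat.exists_eq_add_of_le hk
    obtain ⟨i1, -, i3⟩ := hmain j
    refine ⟨i1, i3.trans (min_le_left _ _), ?_⟩
    have := i3.trans (min_le_right _ _)
    linarith
  have hlim : Tendsto x atTop (nhds xstar) := by
    rw [Metric.tendsto_atTop]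
    intro e he
    obtain ⟨k₀, hk₀⟩ := htail e he
    exact ⟨k₀, fun k hk => by rw [dist_eq_norm]; exact (hk₀ k hk).2.2⟩
  have hlim0 : Tendsto (fun k => ‖x k - xstar‖) atTop (nhds 0) :=
    tendsto_iff_norm_sub_tendsto_zero.1 hlim
  obtain ⟨k₀, hk₀⟩ := htail 1 one_pos
  have hloc' := fun k hk => hloc k (hk₀ k hk).1 (hk₀ k hk).2.1
  refine ⟨hlim, lt_min (by linarith) (by linarith), ?_, ⟨C, hC, k₀, fun k hk => (hloc' k hk).2.2.1⟩,
    hqq1, ?_, ⟨C, hC, k₀, fun k hk => (hloc' k hk).2.2.2.1⟩⟩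
  · have h0 : Tendsto (fun k => C * ‖x k - xstar‖) atTop (nhds 0) := by
      simpa using hlim0.const_mul C
    refine tendsto_of_tendsto_of_tendsto_of_le_of_le' tendsto_const_nhds h0
      (Eventually.of_forall fun k => norm_nonneg _) ?_
    filter_upwards [eventually_ge_atTop k₀] with k hk
    exact (hloc' k hk).2.2.2.2.2
  · exact squeeze_zero (fun k => infDist_nonneg) hDle hlim0
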